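/- arXiv:2311.03248 — 2 statements merged into one kernel-verified Lean document; each statement's English description precedes it below -/
import Mathlib

section
/- For all integers n ≥ 0 and t ≥ 0 and for each α ∈ {3, 8, 9, 14, 17, 19, 28, 32, 39, 42, 43, 47, 52, 53, 54}, B_{55}^{(55t+32)}(55n + α) ≡ 0 (mod 55). -/
/-!
Let `f = ∏ (1 - q ^ m)` be Euler's product. The series `∑ B 55 r n q ^ n` equals
`(f(q ^ 55) / f(q)) ^ r`. With `r = 55 t + 32` one has `r + 3 ≡ 0 (mod 5)` and
`r + 1 ≡ 0 (mod 11)`, so since `f ^ p ≡ f(q ^ p) (mod p)`, the generating function is `f ^ 3` times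
a series in `q ^ 5` modulo 5, and `f` times a series in `q ^ 11` modulo 11
(`coeff_regSeries_pow`). It remains to see that the relevant coefficients of these powers vanish.

* Modulo 11: by Euler's pentagonal number theorem, `f` is supported on the `N` for which `24 N + 1`
  is a square, and `24 α + 1` is a non-residue modulo 11 for all the listed `α`.
* Modulo 5: by Jacobi's identity `f ^ 3 = ∑ (-1) ^ j (2 j + 1) q ^ (j (j + 1) / 2)`, the coefficient
  of `q ^ N` can only be nonzero if `8 N + 1` is a square `(2 j + 1) ^ 2` prime to 5, whereas
  `8 α + 1` is a non-residue or zero modulo 5 for all the listed `α`.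

Jacobi's identity is obtained from a finite version (`finite_jacobi`): the `q`-binomial theorem for
`∏_{i ≤ 2n} (q ^ n + z q ^ i)` is differentiated with respect to `z` at the root `z = -1`. Gaussian
binomials near the middle of row `2 n + 1` converge to `1 / f`, which gives the identity up to
order `n` (`jacobi`).
-/

/-- `B ℓ r n` is the number of `ℓ`-regular `r`-multipartitions of `n`:
ordered `r`-tuples `(λ⁽¹⁾, …, λ⁽ʳ⁾)` of partitions, none of whose parts is
divisible by `ℓ`, whose sizes sum to `n`. -/
def B (ℓ r n : ℕ) : ℕ :=
  Fintype.card {f : Fin r → Σ a : Fin (n + 1), Nat.Partition a //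
    (∑ i, ((f i).1 : ℕ)) = n ∧ ∀ i, ∀ part ∈ (f i).2.parts, ¬ ℓ ∣ part}

open Finset

namespace Regular55

/-! ### A finite form of Jacobi's identity -/

section Jacobi

/-- The finite `q`-factorial `(q; q)_n = ∏_{i=1}^{n} (1 - q^i)`. -/
def qFac {A : Type*} [CommRing A] (q : A) (n : ℕ) : A := ∏ i ∈ range n, (1 - q ^ (i + 1))

/-- The Gaussian binomial coefficient, defined by its `q`-Pascal recurrence. -/
def gauss {A : Type*} [CommRing A] (q : A) : ℕ → ℕ → A
  | _, 0 => 1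
  | 0, _ + 1 => 0
  | N + 1, k + 1 => gauss q N k + q ^ (k + 1) * gauss q N (k + 1)

/-- The triangular number `0 + 1 + ⋯ + (n - 1) = n (n - 1) / 2`. -/
def tri (n : ℕ) : ℕ := ∑ i ∈ range n, i

lemma tri_succ (n : ℕ) : tri (n + 1) = tri n + n := sum_range_succ _ _

lemma two_mul_tri_succ (n : ℕ) : 2 * tri (n + 1) = n * (n + 1) := by
  induction n with
  | zero => simp [tri]
  | succ n ih => rw [tri_succ, mul_add, ih]; ring

lemma two_mul_tri (n : ℕ) : (2 * tri n : ℤ) = n * (n - 1) := by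
  have h1 := tri_succ n
  have h2 := two_mul_tri_succ n
  zify at h1 h2
  linarith

lemma tri_upper (j d : ℕ) :
    tri (j + d + 1 + j) + (j + d) * d = tri (j + d) + (j + d) * (j + d) + (j + d) + tri (j + 1) := by
  have h1 := two_mul_tri (j + d + 1 + j)
  have h2 := two_mul_tri (j + d)
  have h3 := two_mul_tri (j + 1)
  zify
  push_cast at h1 h2 h3
  linarith

lemma tri_lower (j d : ℕ) :
    tri d + (j + d) * (j + d + 1 + j) =
      tri (j + d) + (j + d) * (j + d) + (j + d) + tri (j + 1) := by
  have h1 := two_mul_tri d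
  have h2 := two_mul_tri (j + d)
  have h3 := two_mul_tri (j + 1)
  zify
  push_cast at h1 h2 h3
  linarith

section General

variable {A : Type*} [CommRing A] (q : A)

@[simp] lemma gauss_zero_right (N : ℕ) : gauss q N 0 = 1 := by cases N <;> simp [gauss]

lemma gauss_succ_succ (N k : ℕ) :
    gauss q (N + 1) (k + 1) = gauss q N k + q ^ (k + 1) * gauss q N (k + 1) := by simp [gauss]

lemma gauss_eq_zero {N k : ℕ} (h : N < k) : gauss q N k = 0 := by
  induction N generalizing k with
  | zero => obtain ⟨k, rfl⟩ := Nat.exists_eq_succ_of_ne_zero h.ne'; simp [gauss]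
  | succ N ih =>
    obtain ⟨k, rfl⟩ := Nat.exists_eq_succ_of_ne_zero (Nat.ne_zero_of_lt h)
    rw [gauss_succ_succ, ih (by omega), ih (by omega)]; simp

lemma qFac_succ (n : ℕ) : qFac q (n + 1) = qFac q n * (1 - q ^ (n + 1)) := prod_range_succ _ _

@[simp] lemma qFac_zero : qFac q 0 = 1 := rfl

lemma gauss_mul_qFac (N k m : ℕ) (h : k + m = N) :
    gauss q N k * qFac q k * qFac q m = qFac q N := by
  induction N generalizing k m with
  | zero =>
    obtain rfl : k = 0 := by omega
    obtain rfl : m = 0 := by omega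
    simp
  | succ N ih =>
    rcases k with _ | k
    · obtain rfl : m = N + 1 := by omega
      simp
    rcases m with _ | m
    · obtain rfl : k = N := by omega
      rw [gauss_succ_succ, gauss_eq_zero q (Nat.lt_succ_self k), qFac_succ]
      have := ih k 0 rfl
      simp only [qFac_zero, mul_one] at this ⊢
      linear_combination (1 - q ^ (k + 1)) * this
    · have h1 := ih k (m + 1) (by omega)
      have h2 := ih (k + 1) m (by omega)
      obtain rfl : N = k + m + 1 := by omega
      rw [gauss_succ_succ, qFac_succ q (k + m + 1), qFac_succ q m, qFac_succ q k]
      rw [qFac_succ] at h1 h2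
      linear_combination (1 - q ^ (k + 1)) * h1 + q ^ (k + 1) * (1 - q ^ (m + 1)) * h2

open Polynomial in
/-- The homogeneous `q`-binomial theorem, with a polynomial `z` over the base ring. -/
lemma qBinomial (y : A) (N : ℕ) (z : A[X]) :
    ∏ i ∈ range N, (C y + z * C (q ^ i)) =
      ∑ k ∈ range (N + 1), C (q ^ tri k * gauss q N k * y ^ (N - k)) * z ^ k := by
  induction N generalizing z with
  | zero => simp [tri]
  | succ N ih =>
    have h : ∀ i, C y + z * C (q ^ (i + 1)) = C y + (z * C q) * C (q ^ i) := by
      intro i; rw [pow_succ', C_mul]; ring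
    rw [prod_range_succ']
    simp_rw [h]
    rw [ih, pow_zero, map_one, mul_one, mul_add]
    -- extend the first sum by the vanishing term `k = N + 1`
    have e1 : (∑ k ∈ range (N + 1), C (q ^ tri k * gauss q N k * y ^ (N - k)) * (z * C q) ^ k) * C y
        = ∑ k ∈ range (N + 2), C (q ^ (tri k + k) * gauss q N k * y ^ (N + 1 - k)) * z ^ k := by
      rw [sum_range_succ _ (N + 1), gauss_eq_zero q (Nat.lt_succ_self N), sum_mul]
      simp only [mul_zero, zero_mul, map_zero, add_zero]
      refine sum_congr rfl fun k hk => ?_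
      have : N + 1 - k = N - k + 1 := by have := mem_range.1 hk; omega
      rw [this, pow_succ y, pow_add]
      simp only [C_mul, mul_pow, C_pow]
      ring
    rw [e1, sum_range_succ', sum_range_succ' _ (N + 1), sum_mul, add_right_comm, ← sum_add_distrib]
    congr 1
    · refine sum_congr rfl fun k hk => ?_
      rw [gauss_succ_succ, tri_succ, Nat.add_sub_add_right]
      simp only [C_mul, mul_pow, C_pow, C_add, pow_add]
      ring
    · simp [tri]

lemma prod_pow_sub_pow (n : ℕ) :
    ∏ i ∈ range n, (q ^ n - q ^ i) = (-1) ^ n * q ^ tri n * qFac q n := by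
  have h : ∀ i ∈ range n, q ^ n - q ^ i = (-1) * q ^ i * (1 - q ^ (n - 1 - i + 1)) := by
    intro i hi
    have := mem_range.1 hi
    have e : q ^ n = q ^ i * q ^ (n - 1 - i + 1) := by rw [← pow_add]; congr 1; omega
    rw [e]; ring
  rw [prod_congr rfl h, prod_mul_distrib, prod_mul_distrib, prod_const, card_range,
    prod_pow_eq_pow_sum, prod_range_reflect (fun i => 1 - q ^ (i + 1)) n]
  rfl

lemma prod_pow_sub_pow' (n : ℕ) :
    ∏ i ∈ range n, (q ^ n - q ^ (n + (i + 1))) = q ^ (n * n) * qFac q n := by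
  have h : ∀ i, q ^ n - q ^ (n + (i + 1)) = q ^ n * (1 - q ^ (i + 1)) := by
    intro i; rw [pow_add]; ring
  simp_rw [h]
  rw [prod_mul_distrib, prod_const, card_range, ← pow_mul]
  rfl

/-- The `q`-binomial theorem with `y = q ^ n` and `N = 2 n + 1`, differentiated at its root
`z = -1`. -/
lemma sum_gauss_deriv (n : ℕ) :
    ∑ k ∈ range (2 * n + 2),
      (-1) ^ k * ((k : A) - n) * (q ^ (tri k + n * (2 * n + 1 - k)) * gauss q (2 * n + 1) k) =
    -((-1) ^ n * q ^ (tri n + n * n + n) * qFac q n ^ 2) := by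
  have key := qBinomial q (q ^ n) (2 * n + 1) Polynomial.X
  have hsplit : ∏ i ∈ range (2 * n + 1),
      (Polynomial.C (q ^ n) + Polynomial.X * Polynomial.C (q ^ i)) =
      (Polynomial.C (q ^ n) + Polynomial.X * Polynomial.C (q ^ n)) *
      ((∏ i ∈ range n, (Polynomial.C (q ^ n) + Polynomial.X * Polynomial.C (q ^ i))) *
       ∏ i ∈ range n, (Polynomial.C (q ^ n) + Polynomial.X * Polynomial.C (q ^ (n + (i + 1))))) := by
    rw [show 2 * n + 1 = n + (n + 1) by ring, prod_range_add, prod_range_succ' _ n]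
    simp only [add_zero]
    ring
  rw [hsplit] at key
  have h0 := congrArg (Polynomial.eval (-1)) key
  have h1 := congrArg (fun p => Polynomial.eval (-1) (Polynomial.derivative p)) key
  simp only [Polynomial.derivative_mul, Polynomial.eval_add, Polynomial.eval_mul,
    Polynomial.derivative_sum, Polynomial.eval_finsetSum, Polynomial.derivative_add,
    Polynomial.derivative_C, Polynomial.derivative_X, Polynomial.eval_C, Polynomial.eval_X,
    Polynomial.eval_prod, Polynomial.eval_pow,
    Polynomial.derivative_X_pow, zero_mul, zero_add, one_mul, mul_zero, add_zero,
    neg_one_mul, add_neg_cancel] at h0 h1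
  simp only [← sub_eq_add_neg, prod_pow_sub_pow, prod_pow_sub_pow'] at h1
  have e : ∀ k ∈ range (2 * n + 2),
      (-1) ^ k * ((k : A) - n) * (q ^ (tri k + n * (2 * n + 1 - k)) * gauss q (2 * n + 1) k) =
      -(q ^ tri k * gauss q (2 * n + 1) k * (q ^ n) ^ (2 * n + 1 - k) * ((k : A) * (-1) ^ (k - 1)))
      - n * (q ^ tri k * gauss q (2 * n + 1) k * (q ^ n) ^ (2 * n + 1 - k) * (-1) ^ k) := by
    intro k _
    rw [pow_add, pow_mul]
    rcases k with _ | k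
    · simp
    · rw [Nat.add_sub_cancel, pow_succ (-1 : A)]; ring
  rw [sum_congr rfl e, sum_sub_distrib, sum_neg_distrib, ← mul_sum, ← h0]
  have h1' := h1.symm
  rw [show 2 * n + 1 + 1 = 2 * n + 2 by ring] at h1'
  rw [h1', pow_add, pow_add]
  ring

end General

/-- A finite form of Jacobi's identity for `(q; q)_∞ ^ 3`. -/
lemma finite_jacobi {A : Type*} [CommRing A] [IsDomain A] {q : A} (hq : q ≠ 0) (n : ℕ) :
    qFac q n ^ 2 = ∑ j ∈ range (n + 1), (-1) ^ j * q ^ tri (j + 1) *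
      (j * gauss q (2 * n + 1) (n - j) + (j + 1) * gauss q (2 * n + 1) (n + 1 + j)) := by
  have key := sum_gauss_deriv q n
  rw [show 2 * n + 2 = (n + 1) + (n + 1) by ring, sum_range_add, ← sum_range_reflect,
    ← sum_add_distrib] at key
  have hne : (-1 : A) ^ n * q ^ (tri n + n * n + n) ≠ 0 := by
    simp [hq]
  apply mul_left_cancel₀ hne
  rw [← neg_inj, ← key, mul_sum, ← sum_neg_distrib]
  refine sum_congr rfl fun j hj => ?_
  obtain ⟨d, rfl⟩ := Nat.exists_eq_add_of_le (Nat.lt_succ_iff.1 (mem_range.1 hj))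
  have s1 : j + d + 1 - 1 - j = d := by omega
  have s2 : 2 * (j + d) + 1 - d = j + d + 1 + j := by omega
  have s3 : 2 * (j + d) + 1 - (j + d + 1 + j) = d := by omega
  have s4 : j + d - j = d := by omega
  have hs : ((-1 : A) ^ j) * (-1) ^ j = 1 := by rw [← mul_pow]; simp
  rw [s1, s2, s3, s4, tri_lower, tri_upper]
  simp only [pow_add, pow_one, Nat.cast_add, Nat.cast_one]
  linear_combination ((-1) ^ d * q ^ tri (j + d) * q ^ ((j + d) * (j + d)) * q ^ j * q ^ d *
    q ^ tri (j + 1) * j * gauss q (2 * (j + d) + 1) d) * hs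

end Jacobi

/-! ### Euler's product and the regular generating function -/

section Series

open PowerSeries

variable {R : Type*} [CommRing R]

lemma X_pow_dvd_pentagonalSeries_sub_qFac (n : ℕ) :
    (X : R⟦X⟧) ^ (n + 1) ∣ pentagonalSeries R - qFac X n := by
  rw [X_pow_dvd_iff]
  intro m hm
  obtain ⟨s₀, hs₀⟩ := Filter.eventually_atTop.1 (coeff_prod_one_sub_X_pow_eventually_eq R m)
  have h1 := hs₀ (s₀ ∪ range n) subset_union_left
  have h2 : (X : R⟦X⟧) ^ (n + 1) ∣ ∏ i ∈ (s₀ ∪ range n) \ range n, (1 - X ^ (i + 1)) - 1 := by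
    refine prod_induction _ (fun a => (X : R⟦X⟧) ^ (n + 1) ∣ a - 1) ?_ (by simp) ?_
    · intro a b ha hb
      rw [show a * b - 1 = a * (b - 1) + (a - 1) by ring]
      exact dvd_add (hb.mul_left _) ha
    · intro i hi
      have : n ≤ i := by simpa using (mem_sdiff.1 hi).2
      rw [sub_sub_cancel_left, dvd_neg]
      exact pow_dvd_pow _ (by omega)
  have h3 : (X : R⟦X⟧) ^ (n + 1) ∣ ∏ i ∈ s₀ ∪ range n, (1 - X ^ (i + 1)) - qFac X n := by
    rw [← prod_sdiff (subset_union_right : range n ⊆ s₀ ∪ range n)]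
    convert h2.mul_right (qFac X n) using 1
    rw [qFac]; ring
  rw [map_sub, ← h1, ← map_sub]
  exact X_pow_dvd_iff.1 h3 m hm

lemma isUnit_pentagonalSeries : IsUnit (pentagonalSeries R) := by
  rw [isUnit_iff_constantCoeff]
  have h := X_pow_dvd_iff.1 (X_pow_dvd_pentagonalSeries_sub_qFac (R := R) 0) 0 (by simp)
  rw [map_sub, sub_eq_zero] at h
  rw [← coeff_zero_eq_constantCoeff_apply, h]
  simp

/-- For `k, m ≥ d`, the Gaussian binomial `[k + m; k]` agrees with `1 / (q; q)_∞` up to order `d`. -/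
lemma X_pow_dvd_gauss_mul_sub_one {d k m N : ℕ} (hk : d ≤ k) (hm : d ≤ m) (h : k + m = N) :
    (X : R⟦X⟧) ^ (d + 1) ∣ pentagonalSeries R * gauss X N k - 1 := by
  have hf (r : ℕ) (hr : d ≤ r) : (X : R⟦X⟧) ^ (d + 1) ∣ pentagonalSeries R - qFac X r :=
    (pow_dvd_pow _ (by omega)).trans (X_pow_dvd_pentagonalSeries_sub_qFac r)
  have hg := gauss_mul_qFac (X : R⟦X⟧) N k m h
  rw [← (isUnit_pentagonalSeries (R := R)).dvd_mul_left]
  have e : pentagonalSeries R * (pentagonalSeries R * gauss X N k - 1) =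
      (pentagonalSeries R - qFac X k) * (pentagonalSeries R * gauss X N k) +
      (pentagonalSeries R - qFac X m) * (gauss X N k * qFac X k) -
      (pentagonalSeries R - qFac X N) := by
    linear_combination hg
  rw [e]
  exact dvd_sub (dvd_add ((hf k hk).mul_right _) ((hf m hm).mul_right _)) (hf N (by omega))

/-- **Jacobi's identity** `(q; q)_∞ ^ 3 = ∑ (-1) ^ j (2 j + 1) q ^ (j (j + 1) / 2)`, up to an
arbitrary order. -/
lemma jacobi [IsDomain R] (n : ℕ) :
    (X : R⟦X⟧) ^ (n + 1) ∣ pentagonalSeries R ^ 3 -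
      ∑ j ∈ range (n + 1), (-1) ^ j * (2 * (j : R⟦X⟧) + 1) * X ^ tri (j + 1) := by
  have e : pentagonalSeries R ^ 3 -
      ∑ j ∈ range (n + 1), (-1) ^ j * (2 * (j : R⟦X⟧) + 1) * X ^ tri (j + 1) =
      (pentagonalSeries R - qFac X n) *
        (pentagonalSeries R * (pentagonalSeries R + qFac X n)) +
      ∑ j ∈ range (n + 1), (-1) ^ j *
        ((j : R⟦X⟧) * (X ^ tri (j + 1) * (pentagonalSeries R * gauss X (2 * n + 1) (n - j) - 1)) +
        ((j : R⟦X⟧) + 1) * (X ^ tri (j + 1) *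
          (pentagonalSeries R * gauss X (2 * n + 1) (n + 1 + j) - 1))) := by
    have h := finite_jacobi (A := R⟦X⟧) X_ne_zero n
    have h' : ∑ j ∈ range (n + 1), (-1) ^ j *
        ((j : R⟦X⟧) * (X ^ tri (j + 1) * (pentagonalSeries R * gauss X (2 * n + 1) (n - j) - 1)) +
        ((j : R⟦X⟧) + 1) * (X ^ tri (j + 1) *
          (pentagonalSeries R * gauss X (2 * n + 1) (n + 1 + j) - 1))) =
        pentagonalSeries R * qFac X n ^ 2 -
        ∑ j ∈ range (n + 1), (-1) ^ j * (2 * (j : R⟦X⟧) + 1) * X ^ tri (j + 1) := by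
      rw [h, mul_sum, ← sum_sub_distrib]
      refine sum_congr rfl fun j _ => ?_
      ring
    rw [h']
    ring
  rw [e]
  refine dvd_add ((X_pow_dvd_pentagonalSeries_sub_qFac n).mul_right _) (dvd_sum fun j hj => ?_)
  have hjn := mem_range.1 hj
  have ht := tri_succ j
  have aux (a : R⟦X⟧) (ha : X ^ (n - j + 1) ∣ a) : X ^ (n + 1) ∣ X ^ tri (j + 1) * a := by
    refine (pow_dvd_pow X (?_ : n + 1 ≤ tri (j + 1) + (n - j + 1))).trans ?_
    · omega
    · rw [pow_add]; exact mul_dvd_mul_left _ ha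
  refine (dvd_add ((aux _ ?_).mul_left _) ((aux _ ?_).mul_left _)).mul_left _
  · exact X_pow_dvd_gauss_mul_sub_one (m := n + 1 + j) (by omega) (by omega) (by omega)
  · exact X_pow_dvd_gauss_mul_sub_one (m := n - j) (by omega) (by omega) (by omega)

lemma coeff_pentagonalSeries_cube {N : ℕ} (hN : N % 5 = 2 ∨ N % 5 = 3 ∨ N % 5 = 4) :
    (pentagonalSeries (ZMod 5) ^ 3).coeff N = 0 := by
  have hdom : IsDomain (ZMod 5) := by
    have : Fact (Nat.Prime 5) := ⟨by norm_num⟩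
    infer_instance
  have h := X_pow_dvd_iff.1 (jacobi (R := ZMod 5) N) N (by omega)
  rw [map_sub, sub_eq_zero] at h
  rw [h, map_sum]
  refine sum_eq_zero fun j _ => ?_
  have e : ((-1) ^ j * (2 * (j : (ZMod 5)⟦X⟧) + 1) * X ^ tri (j + 1)) =
      C ((-1) ^ j * (2 * (j : ZMod 5) + 1)) * X ^ tri (j + 1) := by
    simp only [map_mul, map_pow, map_neg, map_one, map_add, map_natCast, map_ofNat]
  rw [e, coeff_C_mul, coeff_X_pow]
  split_ifs with hj
  · -- `8 N + 1 = (2 j + 1) ^ 2`, so modulo 5 either `N` is 0 or 1, or `2 j + 1` vanishes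
    have h2 := two_mul_tri_succ j
    rw [← hj] at h2
    have h3 : 2 * (N : ZMod 5) = j * (j + 1) := by exact_mod_cast congrArg (Nat.cast : ℕ → ZMod 5) h2
    have h4 : (N : ZMod 5) = (N % 5 : ℕ) := by simp
    have h5 : 2 * (j : ZMod 5) + 1 = 0 := by
      rw [h4] at h3
      generalize (j : ZMod 5) = x at h3 ⊢
      rcases hN with h | h | h <;> rw [h] at h3 <;> revert x <;> decide
    simp [h5]
  · simp

lemma coeff_pentagonalSeries_eleven {N : ℕ}
    (hN : N % 11 = 3 ∨ N % 11 = 6 ∨ N % 11 = 8 ∨ N % 11 = 9 ∨ N % 11 = 10) :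
    (pentagonalSeries (ZMod 11)).coeff N = 0 := by
  apply coeff_pentagonalSeries_eq_zero
  rintro ⟨k, rfl⟩
  have h2 := two_mul_natCast_pentagonal k
  have h3 : 2 * (pentagonal k : ZMod 11) = k * (3 * k - 1) := by
    exact_mod_cast congrArg (Int.cast : ℤ → ZMod 11) h2
  have h4 : (pentagonal k : ZMod 11) = (pentagonal k % 11 : ℕ) := by simp
  rw [h4] at h3
  generalize (k : ZMod 11) = x at h3
  rcases hN with h | h | h | h | h <;> rw [h] at h3 <;> revert x <;> decide

/-- The generating function of the `ℓ`-regular partitions. -/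
noncomputable def regSeries (R : Type*) [CommRing R] (ℓ : ℕ) : R⟦X⟧ :=
  PowerSeries.mk fun n ↦ (#(Nat.Partition.restricted n (¬ ℓ ∣ ·)) : R)

lemma regSeries_mul_pentagonalSeries {ℓ : ℕ} (hℓ : ℓ ≠ 0) :
    regSeries R ℓ * pentagonalSeries R = expand ℓ hℓ (pentagonalSeries R) := by
  let _ : TopologicalSpace R := ⊥
  have _ : DiscreteTopology R := ⟨rfl⟩
  open scoped PowerSeries.WithPiTopology in
  have hf := WithPiTopology.hasProd_one_sub_X_pow R
  have hP := (Nat.Partition.hasProd_powerSeriesMk_card_restricted R (¬ ℓ ∣ ·)).mul hf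
  have hc : Continuous (expand ℓ hℓ : R⟦X⟧ →ₐ[R] R⟦X⟧) := by
    rw [continuous_iff_continuousAt]
    intro a
    rw [ContinuousAt, WithPiTopology.tendsto_iff_coeff_tendsto]
    intro d
    simp only [coeff_expand]
    split_ifs
    · exact (WithPiTopology.continuous_coeff R _).tendsto a
    · exact tendsto_const_nhds
  have hE := hf.map (expand ℓ hℓ : R⟦X⟧ →ₐ[R] R⟦X⟧) hc
  have hterm : (fun i ↦ (if ¬ ℓ ∣ i + 1 then ∑' j : ℕ, (X : R⟦X⟧) ^ ((i + 1) * j) else 1) *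
      (1 - X ^ (i + 1))) = fun i ↦ if ℓ ∣ i + 1 then 1 - X ^ (i + 1) else 1 := by
    funext i
    by_cases h : ℓ ∣ i + 1
    · simp [h]
    · simp only [h, not_false_eq_true, if_true, if_false, pow_mul]
      exact WithPiTopology.tsum_pow_mul_one_sub_of_constantCoeff_eq_zero (by simp)
  rw [hterm] at hP
  have hinj : Function.Injective fun i : ℕ ↦ ℓ * (i + 1) - 1 := by
    intro a b hab
    have ha : 0 < ℓ * (a + 1) := by positivity
    have hb : 0 < ℓ * (b + 1) := by positivity
    have : ℓ * (a + 1) = ℓ * (b + 1) := by simp only at hab; omega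
    have := Nat.eq_of_mul_eq_mul_left (Nat.pos_of_ne_zero hℓ) this
    omega
  rw [← hinj.hasProd_iff] at hP
  · have hcomp : ((fun i ↦ if ℓ ∣ i + 1 then 1 - (X : R⟦X⟧) ^ (i + 1) else 1) ∘
        fun i ↦ ℓ * (i + 1) - 1) =
        (expand ℓ hℓ : R⟦X⟧ →ₐ[R] R⟦X⟧) ∘ fun n ↦ 1 - X ^ (n + 1) := by
      funext i
      have ha : 0 < ℓ * (i + 1) := by positivity
      simp [Nat.sub_add_cancel ha, ← pow_mul]
    rw [hcomp] at hP
    exact hP.unique hE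
  · intro x hx
    rw [if_neg]
    rintro ⟨c, hc⟩
    rcases c with _ | c
    · simp at hc
    · exact hx ⟨c, by simp only; omega⟩

lemma pow_prime_eq_expand {p : ℕ} [hp : Fact p.Prime] (f : (ZMod p)⟦X⟧) :
    f ^ p = expand p hp.out.ne_zero f := by
  have h := MvPowerSeries.map_frobenius_expand p hp.out.ne_zero (f := f)
  rw [ZMod.frobenius_zmod] at h
  rw [← h]
  exact congrFun (congrArg _ (MvPowerSeries.map_id)) _

/-- If `p ∣ r + c` and `p ∣ ℓ`, the `r`-th power of the regular generating function modulo `p` is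
`(q; q)_∞ ^ c` times a series in `q ^ p`; in particular it inherits the vanishing of coefficients
along residue classes modulo `p`. -/
lemma coeff_regSeries_pow {p : ℕ} [hp : Fact p.Prime] {ℓ r c s m N : ℕ} (hℓ : ℓ = p * m)
    (hm : m ≠ 0) (hr : r + c = p * s)
    (hvanish : ∀ i, i % p = N % p → (pentagonalSeries (ZMod p) ^ c).coeff i = 0) :
    (regSeries (ZMod p) ℓ ^ r).coeff N = 0 := by
  have hp0 := hp.out.ne_zero
  set f := pentagonalSeries (ZMod p) with hf
  obtain ⟨u, hu⟩ := isUnit_pentagonalSeries (R := ZMod p)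
  have h1 : regSeries (ZMod p) ℓ * f = expand p hp0 (expand m hm f) := by
    subst hℓ
    rw [regSeries_mul_pentagonalSeries (mul_ne_zero hp0 hm), expand_mul]
  have hinv : expand p hp0 f * expand p hp0 (↑u⁻¹ : (ZMod p)⟦X⟧) = 1 := by
    rw [← map_mul, hf, ← hu, Units.mul_inv, map_one]
  have h2 : regSeries (ZMod p) ℓ ^ r =
      f ^ c * expand p hp0 (expand m hm f ^ r * (↑u⁻¹ : (ZMod p)⟦X⟧) ^ s) := by
    calc regSeries (ZMod p) ℓ ^ r
        = regSeries (ZMod p) ℓ ^ r * (expand p hp0 f * expand p hp0 (↑u⁻¹ : (ZMod p)⟦X⟧)) ^ s := by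
          rw [hinv, one_pow, mul_one]
      _ = (regSeries (ZMod p) ℓ ^ r * f ^ (r + c)) * expand p hp0 (↑u⁻¹ : (ZMod p)⟦X⟧) ^ s := by
          rw [hr, pow_mul, pow_prime_eq_expand, mul_pow, mul_assoc]
      _ = f ^ c * ((regSeries (ZMod p) ℓ * f) ^ r * expand p hp0 (↑u⁻¹ : (ZMod p)⟦X⟧) ^ s) := by
          rw [pow_add, mul_pow]; ring
      _ = _ := by rw [h1, map_mul, map_pow, map_pow]
  rw [h2, coeff_mul]
  refine sum_eq_zero fun x hx => ?_
  rw [HasAntidiagonal.mem_antidiagonal] at hx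
  by_cases hd : p ∣ x.2
  · rw [hvanish x.1, zero_mul]
    obtain ⟨y, hy⟩ := hd
    rw [← hx, hy, Nat.add_mul_mod_self_left]
  · rw [coeff_expand_of_not_dvd _ _ _ hd, mul_zero]

end Series

/-! ### Multipartitions as coefficients -/

section Counting

open PowerSeries

/-- Packaging a partition of `m ≤ n` together with its size loses nothing. -/
lemma card_filter_sigma (ℓ : ℕ) {m n : ℕ} (hm : m ≤ n) :
    #{x : Σ a : Fin (n + 1), Nat.Partition a | (x.1 : ℕ) = m ∧ ∀ part ∈ x.2.parts, ¬ ℓ ∣ part} =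
      #(Nat.Partition.restricted m (¬ ℓ ∣ ·)) := by
  symm
  let g : Nat.Partition m → Σ a : Fin (n + 1), Nat.Partition a :=
    fun P => ⟨⟨m, Nat.lt_succ_of_le hm⟩, P⟩
  refine card_bij (fun P _ => g P) ?_ ?_ ?_
  · intro P hP
    simpa [g, Nat.Partition.restricted] using hP
  · intro P _ Q _ h
    simpa [g] using h
  · rintro ⟨⟨a, ha⟩, P⟩ hx
    simp only [mem_filter, mem_univ, true_and] at hx
    obtain ⟨rfl, hx⟩ := hx
    exact ⟨P, by simpa [Nat.Partition.restricted] using hx, rfl⟩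

lemma natCast_B (R : Type*) [CommRing R] (ℓ r n : ℕ) :
    (B ℓ r n : R) = (regSeries R ℓ ^ r).coeff n := by
  classical
  have hB : B ℓ r n = #{f : Fin r → Σ a : Fin (n + 1), Nat.Partition a |
      (∑ i, ((f i).1 : ℕ)) = n ∧ ∀ i, ∀ part ∈ (f i).2.parts, ¬ ℓ ∣ part} := by
    rw [B, Fintype.card_subtype]
  have hpow : regSeries R ℓ ^ r = ∏ _i : Fin r, regSeries R ℓ := by simp
  rw [hB, hpow, coeff_prod]
  let size : (Fin r → Σ a : Fin (n + 1), Nat.Partition a) → (Fin r →₀ ℕ) :=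
    fun f => Finsupp.equivFunOnFinite.symm fun i => ((f i).1 : ℕ)
  rw [card_eq_sum_card_fiberwise (f := size) (t := finsuppAntidiag univ n)]
  · rw [Nat.cast_sum]
    refine sum_congr rfl fun l hl => ?_
    have hl' : ∑ i, l i = n := (mem_finsuppAntidiag.1 hl).1
    have hle (i : Fin r) : l i ≤ n := by
      rw [← hl']; exact single_le_sum (f := fun i => l i) (fun _ _ => Nat.zero_le _) (mem_univ i)
    -- the fibre over the size vector `l` is a product of sets of regular partitions of the `l i`
    have hfib : ({f ∈ ({f : Fin r → Σ a : Fin (n + 1), Nat.Partition a |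
        (∑ i, ((f i).1 : ℕ)) = n ∧ ∀ i, ∀ part ∈ (f i).2.parts, ¬ ℓ ∣ part} : Finset _) |
        size f = l} : Finset _) = Fintype.piFinset fun i =>
        ({x : Σ a : Fin (n + 1), Nat.Partition a |
          (x.1 : ℕ) = l i ∧ ∀ part ∈ x.2.parts, ¬ ℓ ∣ part} : Finset _) := by
      ext f
      simp only [mem_filter, mem_univ, true_and, Fintype.mem_piFinset]
      constructor
      · rintro ⟨⟨_, h⟩, rfl⟩ i
        exact ⟨rfl, h i⟩
      · intro h
        refine ⟨⟨?_, fun i => (h i).2⟩, ?_⟩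
        · exact (sum_congr rfl fun i _ => (h i).1).trans hl'
        · ext i; exact (h i).1
    rw [hfib, Fintype.card_piFinset, Nat.cast_prod]
    refine prod_congr rfl fun i _ => ?_
    rw [card_filter_sigma ℓ (hle i), regSeries, coeff_mk]
  · intro f hf
    simp only [coe_filter, mem_univ, true_and, Set.mem_ofPred_eq] at hf
    simpa [size] using hf.1

end Counting

end Regular55

theorem stmt_18 (n t : ℕ) (α : ℕ)
    (hα : α ∈ ({3, 8, 9, 14, 17, 19, 28, 32, 39, 42, 43, 47, 52, 53, 54} : Finset ℕ)) :
    B 55 (55 * t + 32) (55 * n + α) ≡ 0 [MOD 55] := by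
  have h5 : Fact (Nat.Prime 5) := ⟨by norm_num⟩
  have h11 : Fact (Nat.Prime 11) := ⟨by norm_num⟩
  have hα5 : α % 5 = 2 ∨ α % 5 = 3 ∨ α % 5 = 4 := by revert α; decide
  have hα11 : α % 11 = 3 ∨ α % 11 = 6 ∨ α % 11 = 8 ∨ α % 11 = 9 ∨ α % 11 = 10 := by
    revert α; decide
  have d5 : 5 ∣ B 55 (55 * t + 32) (55 * n + α) := by
    rw [← ZMod.natCast_eq_zero_iff, Regular55.natCast_B]
    refine Regular55.coeff_regSeries_pow (c := 3) (s := 11 * t + 7) (m := 11) (by norm_num)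
      (by norm_num) (by ring) fun i hi => Regular55.coeff_pentagonalSeries_cube ?_
    omega
  have d11 : 11 ∣ B 55 (55 * t + 32) (55 * n + α) := by
    rw [← ZMod.natCast_eq_zero_iff, Regular55.natCast_B]
    refine Regular55.coeff_regSeries_pow (c := 1) (s := 5 * t + 3) (m := 5) (by norm_num)
      (by norm_num) (by ring) fun i hi => ?_
    rw [pow_one]
    apply Regular55.coeff_pentagonalSeries_eleven
    omega
  exact Nat.modEq_zero_iff_dvd.2
    (Nat.Coprime.mul_dvd_of_dvd_of_dvd (by norm_num : Nat.Coprime 5 11) d5 d11)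
end

section
/- For all integers n ≥ 0 and t ≥ 0 and for each α ∈ {3, 8, 9, 14, 19, 28, 39, 43, 53, 54}, B_{55}^{(55t+54)}(55n + α) ≡ 0 (mod 55). -/
open PowerSeries Finset
open scoped PowerSeries.WithPiTopology

/-- The generating function of the `55`-regular partitions, with coefficients in `R`. -/
noncomputable def regularSeries (R : Type*) [CommSemiring R] : PowerSeries R :=
  PowerSeries.mk fun n ↦ (#(Nat.Partition.restricted n (¬ 55 ∣ ·)) : R)

/-- The defining count of `B` splits according to the sizes of the `r` components, which is the
expansion of the coefficients of an `r`-th power. -/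
theorem B_eq_coeff (r n : ℕ) : B 55 r n = (regularSeries ℕ ^ r).coeff n := by
  classical
  let T : ℕ → Finset (Σ a : Fin (n + 1), Nat.Partition a) := fun a ↦
    univ.filter fun x ↦ (x.1 : ℕ) = a ∧ ∀ part ∈ x.2.parts, ¬ 55 ∣ part
  have hT : ∀ a ≤ n, #(T a) = #(Nat.Partition.restricted a (¬ 55 ∣ ·)) := by
    intro a ha
    symm
    refine card_bij (fun x _ ↦ ⟨⟨a, by omega⟩, x⟩) ?_ ?_ ?_
    · intro x hx
      simpa [T, Nat.Partition.restricted] using hx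
    · intro x _ y _ h
      simpa using h
    · rintro ⟨⟨b, hb⟩, x⟩ hx
      simp only [T, mem_filter, mem_univ, true_and] at hx
      obtain ⟨rfl, hx⟩ := hx
      exact ⟨x, by simpa [Nat.Partition.restricted] using hx, rfl⟩
  have hpow : regularSeries ℕ ^ r = ∏ _i : Fin r, regularSeries ℕ := by simp
  rw [hpow, coeff_prod, B, Fintype.card_subtype,
    card_eq_sum_card_fiberwise
      (f := fun f ↦ Finsupp.equivFunOnFinite.symm fun i ↦ ((f i).1 : ℕ))
      (t := finsuppAntidiag univ n)]
  · refine sum_congr rfl fun l hl ↦ ?_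
    rw [mem_finsuppAntidiag] at hl
    have hle : ∀ i, l i ≤ n := fun i ↦
      hl.1 ▸ single_le_sum (f := fun i ↦ l i) (fun _ _ ↦ Nat.zero_le _) (mem_univ i)
    have : ∀ i, (regularSeries ℕ).coeff (l i) = #(T (l i)) := fun i ↦ by
      simp [regularSeries, hT _ (hle i)]
    simp_rw [this]
    rw [← Fintype.card_piFinset]
    congr 1
    ext f
    simp only [mem_filter, mem_univ, true_and, Fintype.mem_piFinset, T]
    constructor
    · rintro ⟨⟨-, h⟩, rfl⟩ i
      exact ⟨rfl, h i⟩
    · intro h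
      have hl' : (Finsupp.equivFunOnFinite.symm fun i ↦ ((f i).1 : ℕ)) = l := by
        ext i
        exact (h i).1
      refine ⟨⟨?_, fun i ↦ (h i).2⟩, hl'⟩
      exact (sum_congr rfl fun i _ ↦ (h i).1).trans hl.1
  · intro f hf
    simp only [coe_filter, mem_univ, true_and, Set.mem_ofPred_eq] at hf
    simp [mem_finsuppAntidiag, hf.1]

/-- The range of `expand p`, i.e. the subalgebra of power series in `q^p`, consists of the series
supported on multiples of `p`. -/
theorem mem_range_expand_iff {R : Type*} [CommRing R] {p : ℕ} (hp : p ≠ 0) {f : PowerSeries R} :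
    f ∈ (expand (R := R) p hp).range ↔ ∀ n, ¬ p ∣ n → f.coeff n = 0 := by
  constructor
  · rintro ⟨g, rfl⟩ n hn
    exact coeff_expand_of_not_dvd p hp g hn
  · intro h
    refine ⟨PowerSeries.mk fun n ↦ f.coeff (p * n), ?_⟩
    ext n
    by_cases hn : p ∣ n
    · obtain ⟨k, rfl⟩ := hn
      simp
    · simp [coeff_expand_of_not_dvd p hp _ hn, h n hn]

/-- `G * P = ∏ (1 - q^(55m))` is a power series in `q^p` whenever `p ∣ 55`. -/
theorem regularSeries_mul_mem_range (R : Type*) [CommRing R] [IsDomain R] {p : ℕ} (hp : p ≠ 0)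
    (h55 : p ∣ 55) :
    regularSeries R * pentagonalSeries R ∈ (expand (R := R) p hp).range := by
  let _ : TopologicalSpace R := ⊥
  have _ : DiscreteTopology R := ⟨rfl⟩
  have hprod : HasProd (fun i ↦ (1 - X ^ ((i + 1) * 55) : PowerSeries R))
      (regularSeries R * pentagonalSeries R) := by
    have h1 := Nat.Partition.hasProd_powerSeriesMk_card_countRestricted R (m := 55) (by norm_num)
    -- Glaisher's theorem replaces the factors `1 / (1 - q^i)` by finite geometric sums.
    rw [← Nat.Partition.powerSeriesMk_card_restricted_eq_powerSeriesMk_card_countRestricted R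
      (m := 55) (by norm_num)] at h1
    have h2 := h1.mul (WithPiTopology.hasProd_one_sub_X_pow R)
    refine h2.congr_fun ?_
    intro i
    simp_rw [pow_mul]
    exact (geom_sum_mul_neg _ _).symm
  rw [mem_range_expand_iff]
  intro n hn
  rw [HasProd, WithPiTopology.tendsto_iff_coeff_tendsto] at hprod
  refine tendsto_nhds_unique (hprod n) (tendsto_const_nhds.congr fun s ↦ ?_)
  have hs : ∏ i ∈ s, (1 - X ^ ((i + 1) * 55) : PowerSeries R) ∈ (expand (R := R) p hp).range := by
    refine Subalgebra.prod_mem _ fun i _ ↦ ?_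
    obtain ⟨c, hc⟩ := h55
    exact ⟨1 - X ^ (c * (i + 1)), by simp [← pow_mul, hc]; ring⟩
  exact ((mem_range_expand_iff hp).1 hs n hn).symm

theorem pow_mem_range_expand {p : ℕ} [hp : Fact p.Prime] (f : PowerSeries (ZMod p)) :
    f ^ p ∈ (expand (R := ZMod p) p hp.out.ne_zero).range := by
  refine ⟨f, ?_⟩
  have h := MvPowerSeries.map_frobenius_expand p hp.out.ne_zero (f := f)
  rw [ZMod.frobenius_zmod, MvPowerSeries.map_id] at h
  exact h

/-- If `m` is not congruent to a generalized pentagonal number modulo the prime factor `p` of `55`,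
then `p` divides `B 55 (55t+54) m`. -/
theorem dvd_B {p : ℕ} [hp : Fact p.Prime] (h55 : p ∣ 55) (t m : ℕ)
    (hm : ∀ k : ZMod p, 2 * (m : ZMod p) ≠ k * (3 * k - 1)) :
    p ∣ B 55 (55 * t + 54) m := by
  rw [← ZMod.natCast_eq_zero_iff, B_eq_coeff]
  set P := pentagonalSeries (ZMod p) with hP
  set G := regularSeries (ZMod p) with hG
  have hcast : (((regularSeries ℕ ^ (55 * t + 54)).coeff m : ℕ) : ZMod p) =
      (G ^ (55 * t + 54)).coeff m := by
    have : G = (regularSeries ℕ).map (Nat.castRingHom (ZMod p)) := by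
      ext n
      simp [hG, regularSeries]
    rw [this, ← map_pow, coeff_map]
    rfl
  have hP0 : P.constantCoeff ≠ 0 := by
    have := coeff_pentagonalSeries_pentagonal (ZMod p) 0
    rw [show pentagonal 0 = 0 by simp [pentagonal_def], coeff_zero_eq_constantCoeff_apply] at this
    simp [hP, this]
  have hfac : G ^ (55 * t + 54) = (G * P) ^ (55 * t + 54) * P⁻¹ ^ (55 * (t + 1)) * P := by
    have hinv : P * P⁻¹ = 1 := PowerSeries.mul_inv_cancel P hP0
    calc G ^ (55 * t + 54)
        = G ^ (55 * t + 54) * (P * P⁻¹) ^ (55 * (t + 1)) := by rw [hinv]; simp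
      _ = _ := by ring
  have hmem : (G * P) ^ (55 * t + 54) * P⁻¹ ^ (55 * (t + 1)) ∈
      (expand (R := ZMod p) p hp.out.ne_zero).range := by
    refine mul_mem (pow_mem (regularSeries_mul_mem_range _ _ h55) _) ?_
    obtain ⟨c, hc⟩ := h55
    rw [hc, mul_assoc, pow_mul]
    exact pow_mem (pow_mem_range_expand _) _
  rw [hcast, hfac, coeff_mul]
  refine sum_eq_zero fun ij hij ↦ ?_
  rw [HasAntidiagonal.mem_antidiagonal] at hij
  by_cases hi : p ∣ ij.1
  · rw [hP, coeff_pentagonalSeries_eq_zero, mul_zero]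
    rintro ⟨k, hk⟩
    have h := congrArg (Int.cast : ℤ → ZMod p) (two_mul_natCast_pentagonal k)
    rw [hk] at h
    push_cast at h
    apply hm k
    rw [← hij, ← h, Nat.cast_add, (ZMod.natCast_eq_zero_iff _ _).2 hi, zero_add]
  · rw [(mem_range_expand_iff _).1 hmem _ hi, zero_mul]

theorem residues_five : ∀ α ∈ ({3, 8, 9, 14, 19, 28, 39, 43, 53, 54} : Finset ℕ), ∀ k : ZMod 5,
    2 * (α : ZMod 5) ≠ k * (3 * k - 1) := by
  decide

theorem residues_eleven : ∀ α ∈ ({3, 8, 9, 14, 19, 28, 39, 43, 53, 54} : Finset ℕ), ∀ k : ZMod 11,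
    2 * (α : ZMod 11) ≠ k * (3 * k - 1) := by
  decide

theorem stmt_19 (n t : ℕ) (α : ℕ)
    (hα : α ∈ ({3, 8, 9, 14, 19, 28, 39, 43, 53, 54} : Finset ℕ)) :
    B 55 (55 * t + 54) (55 * n + α) ≡ 0 [MOD 55] := by
  rw [Nat.modEq_zero_iff_dvd]
  have h5 : ((55 * n + α : ℕ) : ZMod 5) = α :=
    (ZMod.natCast_eq_natCast_iff' _ _ _).2 (by omega)
  have h11 : ((55 * n + α : ℕ) : ZMod 11) = α :=
    (ZMod.natCast_eq_natCast_iff' _ _ _).2 (by omega)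
  refine Nat.Coprime.mul_dvd_of_dvd_of_dvd (m := 5) (n := 11) (by norm_num) ?_ ?_
  · refine dvd_B (hp := ⟨by norm_num⟩) (by norm_num) t _ ?_
    rw [h5]
    exact residues_five α hα
  · refine dvd_B (hp := ⟨by norm_num⟩) (by norm_num) t _ ?_
    rw [h11]
    exact residues_eleven α hα
end
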